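/- Let A be a CCR (liminal) C*-algebra and A⁺ its unitization. Then A⁺ is directly finite: if a, b ∈ A⁺ satisfy ab = 1, then ba = 1. -/

import Mathlib

/-!
If `a * b = 1` in the unitization of `A`, then `b * a - 1` lies in `A`, because the scalars commute.
A representation of `A` by compact operators sends `a` and `b` to compact perturbations of nonzero
scalars, and by the Fredholm alternative such an operator is invertible as soon as it has a left
inverse; so the representation kills `b * a - 1`. Hence it is enough that the representations by
compact operators separate the points of `A`. For a CCR algebra these include all irreducible
representations, which separate points: by Krein–Milman some extreme point of the state space does
not vanish at a given nonzero `star x * x`, and its GNS representation is irreducible.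
-/

open scoped ComplexOrder ComplexStarModule InnerProductSpace

section CompactPerturbation

open Module End

variable {𝕜 X : Type*} [NontriviallyNormedField 𝕜] [NormedAddCommGroup X] [NormedSpace 𝕜 X]
  [CompleteSpace X]

theorem isUnit_smul_one_add_of_isCompactOperator {K : X →L[𝕜] X}
    (hK : IsCompactOperator K) {c : 𝕜} (hc : c ≠ 0)
    (hinj : Function.Injective (c • 1 + K : X →L[𝕜] X)) : IsUnit (c • 1 + K) := by
  rcases hK.hasEigenvalue_or_mem_resolventSet (neg_ne_zero.mpr hc) with heig | hres
  · obtain ⟨v, hv⟩ := heig.exists_hasEigenvector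
    have hKv : K v = -c • v := hv.apply_eq_smul
    have hker : (c • 1 + K) v = 0 := by simp [hKv]
    exact absurd ((map_eq_zero_iff _ hinj).mp hker) hv.2
  · rw [spectrum.mem_resolventSet_iff, ← IsUnit.neg_iff] at hres
    simpa [Algebra.algebraMap_eq_smul_one, add_comm] using hres

theorem smul_one_add_mul_eq_one_symm_of_isCompactOperator {K S : X →L[𝕜] X}
    (hK : IsCompactOperator K) {c : 𝕜} (hc : c ≠ 0) (h : S * (c • 1 + K) = 1) :
    (c • 1 + K) * S = 1 := by
  have hinj : Function.Injective (c • 1 + K : X →L[𝕜] X) :=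
    Function.LeftInverse.injective (g := S) fun x => DFunLike.congr_fun h x
  obtain ⟨u, hu⟩ := isUnit_smul_one_add_of_isCompactOperator hK hc hinj
  rw [← hu] at h ⊢
  rw [u.eq_inv_of_mul_eq_one_right h, u.mul_inv]

end CompactPerturbation

section InvariantSubspaces

/-- A family of bounded operators is topologically irreducible if its only closed invariant
subspaces are `⊥` and `⊤`. The family is indexed by an arbitrary type, so that the notion applies to
representations of unital and non-unital algebras alike; the zero space is allowed. -/
def IsTopologicallyIrreducible {ι 𝕜 X : Type*} [NormedField 𝕜] [NormedAddCommGroup X]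
    [NormedSpace 𝕜 X] (T : ι → X →L[𝕜] X) : Prop :=
  ∀ U : Submodule 𝕜 X, IsClosed (U : Set X) → (∀ i, ∀ x ∈ U, T i x ∈ U) → U = ⊥ ∨ U = ⊤

theorem eq_top_of_cyclic_mem {ι 𝕜 X : Type*} [NormedField 𝕜] [NormedAddCommGroup X]
    [NormedSpace 𝕜 X] {T : ι → X →L[𝕜] X} {ξ : X} (hξ : Dense (Set.range fun i => T i ξ))
    {U : Submodule 𝕜 X} (hUc : IsClosed (U : Set X)) (hU : ∀ i, ∀ x ∈ U, T i x ∈ U)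
    (hξU : ξ ∈ U) : U = ⊤ := by
  have hrange : Set.range (fun i => T i ξ) ⊆ U := Set.range_subset_iff.mpr fun i => hU i ξ hξU
  exact Submodule.eq_top_iff'.mpr fun x => closure_minimal hrange hUc (hξ x)

theorem apply_mem_orthogonal {𝕜 B H F : Type*} [RCLike 𝕜] [Star B] [NormedAddCommGroup H]
    [InnerProductSpace 𝕜 H] [CompleteSpace H] [FunLike F B (H →L[𝕜] H)]
    [StarHomClass F B (H →L[𝕜] H)] {π : F} {U : Submodule 𝕜 H}
    (hU : ∀ b, ∀ x ∈ U, π b x ∈ U) (b : B) {x : H} (hx : x ∈ Uᗮ) : π b x ∈ Uᗮ := by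
  rw [Submodule.mem_orthogonal] at hx ⊢
  intro u hu
  rw [← ContinuousLinearMap.adjoint_inner_left, ← ContinuousLinearMap.star_eq_adjoint, ← map_star]
  exact hx _ (hU (star b) u hu)

end InvariantSubspaces

section GNS

variable {B : Type*} [CStarAlgebra B] [PartialOrder B] [StarOrderedRing B] (f : B →ₚ[ℂ] ℂ)

/-- The cyclic vector of the GNS representation of a positive functional: the class of `1`. -/
noncomputable def gnsCyclicVector : f.GNS := (f.toPreGNS 1 : f.PreGNS)

theorem gnsStarAlgHom_gnsCyclicVector (x : B) :
    f.gnsStarAlgHom x (gnsCyclicVector f) = (f.toPreGNS x : f.PreGNS) := by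
  simp [gnsCyclicVector]

theorem dense_range_gnsStarAlgHom_gnsCyclicVector :
    Dense (Set.range fun x => f.gnsStarAlgHom x (gnsCyclicVector f)) := by
  simp only [gnsStarAlgHom_gnsCyclicVector]
  exact UniformSpace.Completion.denseRange_coe.comp f.toPreGNS.surjective.denseRange
    (UniformSpace.Completion.continuous_coe _)

theorem inner_gnsCyclicVector_gnsStarAlgHom (x : B) :
    ⟪gnsCyclicVector f, f.gnsStarAlgHom x (gnsCyclicVector f)⟫_ℂ = f x := by
  rw [gnsStarAlgHom_gnsCyclicVector, gnsCyclicVector, UniformSpace.Completion.inner_coe,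
    PositiveLinearMap.preGNS_inner_def]
  simp

theorem norm_positiveLinearMap_apply_le (x : B) : ‖f x‖ ≤ ‖f 1‖ * ‖x‖ := by
  set ξ := gnsCyclicVector f
  have hξ : ‖ξ‖ * ‖ξ‖ = ‖f 1‖ := by
    rw [← inner_gnsCyclicVector_gnsStarAlgHom f 1, map_one, one_apply_eq_self,
      inner_self_eq_norm_sq_to_K]
    simp [ξ, sq]
  calc ‖f x‖ = ‖⟪ξ, f.gnsStarAlgHom x ξ⟫_ℂ‖ := by rw [inner_gnsCyclicVector_gnsStarAlgHom]
    _ ≤ ‖ξ‖ * (‖f.gnsStarAlgHom x‖ * ‖ξ‖) :=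
      (norm_inner_le_norm _ _).trans (by gcongr; exact ContinuousLinearMap.le_opNorm _ _)
    _ ≤ ‖ξ‖ * (‖x‖ * ‖ξ‖) := by
      gcongr
      exact NonUnitalStarAlgHom.norm_apply_le f.gnsStarAlgHom x
    _ = ‖f 1‖ * ‖x‖ := by rw [← hξ]; ring

end GNS

section States

variable {B : Type*} [CStarAlgebra B] [PartialOrder B]

/-- Positivity of a continuous linear functional. Functionals are taken in `WeakDual ℂ B`, so that
the states carry the weak-* topology. -/
def IsPositiveFunctional (φ : WeakDual ℂ B) : Prop := ∀ x, 0 ≤ x → 0 ≤ φ x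

/-- The set of states (positive functionals with value `1` at `1`), with the weak-* topology. -/
def stateSpace (B : Type*) [CStarAlgebra B] [PartialOrder B] : Set (WeakDual ℂ B) :=
  {φ | IsPositiveFunctional φ ∧ φ 1 = 1}

theorem convex_stateSpace : Convex ℝ (stateSpace B) := by
  intro φ hφ ψ hψ s t hs ht hst
  refine ⟨fun x hx => ?_, ?_⟩
  · exact add_nonneg (smul_nonneg hs (hφ.1 x hx)) (smul_nonneg ht (hψ.1 x hx))
  · change s • φ 1 + t • ψ 1 = 1
    rw [hφ.2, hψ.2, ← add_smul, hst, one_smul]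

theorem isClosed_stateSpace : IsClosed (stateSpace B) := by
  have hcont (x : B) : Continuous fun φ : WeakDual ℂ B => φ x := WeakDual.eval_continuous x
  have hpos : IsClosed {φ : WeakDual ℂ B | ∀ x, 0 ≤ x → 0 ≤ φ x} := by
    simp only [Set.ofPred_forall]
    exact isClosed_iInter fun x => isClosed_iInter fun _ => isClosed_le continuous_const (hcont x)
  exact hpos.inter (isClosed_eq (hcont 1) continuous_const)

variable [StarOrderedRing B] {φ ψ : WeakDual ℂ B}

theorem IsPositiveFunctional.norm_apply_le (hφ : IsPositiveFunctional φ) (x : B) :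
    ‖φ x‖ ≤ ‖φ 1‖ * ‖x‖ :=
  norm_positiveLinearMap_apply_le (PositiveLinearMap.mk₀ (φ : B →ₗ[ℂ] ℂ) hφ) x

theorem IsPositiveFunctional.eq_zero_of_apply_one_eq_zero (hφ : IsPositiveFunctional φ)
    (h1 : φ 1 = 0) : φ = 0 := by
  refine DFunLike.ext _ _ fun x => norm_le_zero_iff.mp ?_
  simpa [h1] using hφ.norm_apply_le x

theorem isCompact_stateSpace : IsCompact (stateSpace B) := by
  refine (WeakDual.isCompact_closedBall (0 : StrongDual ℂ B) 1).of_isClosed_subset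
    isClosed_stateSpace fun φ hφ => ?_
  rw [Set.mem_preimage, mem_closedBall_zero_iff]
  refine ContinuousLinearMap.opNorm_le_bound _ zero_le_one fun x => ?_
  simpa [hφ.2] using hφ.1.norm_apply_le x

theorem IsPositiveFunctional.inv_smul_mem_stateSpace (hφ : IsPositiveFunctional φ) (h1 : φ 1 ≠ 0) :
    (φ 1)⁻¹ • φ ∈ stateSpace B :=
  ⟨fun x hx => mul_nonneg (inv_nonneg.mpr (hφ 1 zero_le_one)) (hφ x hx), inv_mul_cancel₀ h1⟩

theorem IsPositiveFunctional.eq_smul_of_add_mem_extremePoints (hφ : IsPositiveFunctional φ)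
    (hψ : IsPositiveFunctional ψ) (hext : φ + ψ ∈ (stateSpace B).extremePoints ℝ) :
    φ = φ 1 • (φ + ψ) := by
  have hsum : φ 1 + ψ 1 = 1 := hext.1.2
  by_cases hφ1 : φ 1 = 0
  · rw [hφ1, zero_smul, hφ.eq_zero_of_apply_one_eq_zero hφ1]
  by_cases hψ1 : ψ 1 = 0
  · rw [hψ.eq_zero_of_apply_one_eq_zero hψ1, add_zero]
    rw [hψ1, add_zero] at hsum
    rw [hsum, one_smul]
  obtain ⟨s, hs⟩ : ∃ s : ℝ, φ 1 = s := ⟨_, Complex.eq_re_of_ofReal_le (hφ 1 zero_le_one)⟩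
  obtain ⟨t, ht⟩ : ∃ t : ℝ, ψ 1 = t := ⟨_, Complex.eq_re_of_ofReal_le (hψ 1 zero_le_one)⟩
  have hφs : s • ((φ 1)⁻¹ • φ) = φ := DFunLike.ext _ _ fun x => by
    change s • ((φ 1)⁻¹ * φ x) = φ x
    rw [Complex.real_smul, ← hs, mul_inv_cancel_left₀ hφ1]
  have hψt : t • ((ψ 1)⁻¹ • ψ) = ψ := DFunLike.ext _ _ fun x => by
    change t • ((ψ 1)⁻¹ * ψ x) = ψ x
    rw [Complex.real_smul, ← ht, mul_inv_cancel_left₀ hψ1]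
  have hs0 : 0 < s := Complex.zero_lt_real.mp (hs ▸ (hφ 1 zero_le_one).lt_of_ne' hφ1)
  have ht0 : 0 < t := Complex.zero_lt_real.mp (ht ▸ (hψ 1 zero_le_one).lt_of_ne' hψ1)
  have hst : s + t = 1 := by exact_mod_cast hs ▸ ht ▸ hsum
  -- Normalising both summands exhibits `φ + ψ` as a convex combination of two states.
  have hseg : φ + ψ ∈ openSegment ℝ ((φ 1)⁻¹ • φ) ((ψ 1)⁻¹ • ψ) :=
    ⟨s, t, hs0, ht0, hst, by rw [hφs, hψt]⟩
  rw [← hext.2 (hφ.inv_smul_mem_stateSpace hφ1) (hψ.inv_smul_mem_stateSpace hψ1) hseg,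
    smul_inv_smul₀ hφ1]

theorem exists_isPositiveFunctional_apply_ne_zero {d : B} (hd : 0 ≤ d) (hd0 : d ≠ 0) :
    ∃ φ : WeakDual ℂ B, IsPositiveFunctional φ ∧ φ d ≠ 0 := by
  have hnd : -d ∉ ProperCone.positive ℝ B := fun h =>
    hd0 (le_antisymm (neg_nonneg.mp (ProperCone.mem_positive.mp h)) hd)
  obtain ⟨u, hu, hud⟩ := (ProperCone.positive ℝ B).hyperplane_separation_point hnd
  -- The real functional `x ↦ u (ℜ x)` agrees with `u` on positive elements; complexify it.
  let φ : StrongDual ℂ B := StrongDual.extendRCLike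
    (u ∘L (selfAdjoint.submodule ℝ B).subtypeL ∘L selfAdjointPartL ℝ B)
  have hφ (x : B) (hx : 0 ≤ x) : φ x = u x := by
    have hre : (ℜ x : B) = x := (IsSelfAdjoint.of_nonneg hx).coe_realPart
    have him : ℜ (Complex.I • x) = 0 := by
      rw [realPart_I_smul, (IsSelfAdjoint.of_nonneg hx).imaginaryPart, neg_zero]
    change (u (ℜ x : B) : ℂ) - Complex.I * u (ℜ (Complex.I • x) : B) = u x
    simp [hre, him]
  refine ⟨StrongDual.toWeakDual φ, fun x hx => ?_, ?_⟩
  · change 0 ≤ φ x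
    rw [hφ x hx]
    exact_mod_cast hu x hx
  · change φ d ≠ 0
    rw [hφ d hd]
    have : 0 < u d := by simpa using hud
    exact_mod_cast this.ne'

theorem exists_mem_stateSpace_apply_ne_zero {d : B} (hd : 0 ≤ d) (hd0 : d ≠ 0) :
    ∃ φ ∈ stateSpace B, φ d ≠ 0 := by
  obtain ⟨φ, hφ, hφd⟩ := exists_isPositiveFunctional_apply_ne_zero hd hd0
  have h1 : φ 1 ≠ 0 := fun h1 => hφd (by rw [hφ.eq_zero_of_apply_one_eq_zero h1]; rfl)
  exact ⟨(φ 1)⁻¹ • φ, hφ.inv_smul_mem_stateSpace h1, mul_ne_zero (inv_ne_zero h1) hφd⟩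

theorem exists_mem_extremePoints_stateSpace_apply_ne_zero {d : B} (hd : 0 ≤ d) (hd0 : d ≠ 0) :
    ∃ φ ∈ (stateSpace B).extremePoints ℝ, φ d ≠ 0 := by
  have : LocallyConvexSpace ℝ (WeakDual ℂ B) :=
    WeakBilin.locallyConvexSpace (B := topDualPairing ℂ B)
  have hKreinMilman : closure (convexHull ℝ ((stateSpace B).extremePoints ℝ)) = stateSpace B :=
    closure_convexHull_extremePoints isCompact_stateSpace convex_stateSpace
  by_contra! hvanish
  have hconvex : Convex ℝ {ψ : WeakDual ℂ B | ψ d = 0} := by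
    intro ψ (hψ : ψ d = 0) χ (hχ : χ d = 0) s t _ _ _
    change s • ψ d + t • χ d = 0
    rw [hψ, hχ, smul_zero, smul_zero, add_zero]
  have hclosed : IsClosed {ψ : WeakDual ℂ B | ψ d = 0} :=
    isClosed_eq (WeakDual.eval_continuous d) continuous_const
  have hstates : stateSpace B ⊆ {ψ : WeakDual ℂ B | ψ d = 0} :=
    hKreinMilman ▸ closure_minimal (convexHull_min hvanish hconvex) hclosed
  obtain ⟨φ, hφ, hφd⟩ := exists_mem_stateSpace_apply_ne_zero hd hd0
  exact hφd (hstates hφ)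

end States

section Irreducible

open scoped CStarAlgebra

variable {B H : Type*} [CStarAlgebra B] [NormedAddCommGroup H] [InnerProductSpace ℂ H]
  [CompleteSpace H] {π : B →⋆ₐ[ℂ] (H →L[ℂ] H)}

/-- The functional `x ↦ ⟪v, π x v⟫` attached to a vector `v` of a representation `π`. -/
noncomputable def vectorFunctional (π : B →⋆ₐ[ℂ] (H →L[ℂ] H)) (v : H) : WeakDual ℂ B :=
  StrongDual.toWeakDual
    (innerSL ℂ v ∘L ContinuousLinearMap.apply ℂ H v ∘L ⟨π, map_continuous π⟩)

theorem vectorFunctional_apply (v : H) (x : B) : vectorFunctional π v x = ⟪v, π x v⟫_ℂ := rfl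

theorem isPositiveFunctional_vectorFunctional [PartialOrder B] [StarOrderedRing B] (v : H) :
    IsPositiveFunctional (vectorFunctional π v) := by
  intro x hx
  obtain ⟨y, rfl⟩ := CStarAlgebra.nonneg_iff_eq_star_mul_self.mp hx
  rw [vectorFunctional_apply, map_mul, map_star, mul_apply_eq_comp,
    ContinuousLinearMap.star_eq_adjoint, ContinuousLinearMap.adjoint_inner_right,
    inner_self_eq_norm_sq_to_K]
  positivity

theorem vectorFunctional_add_of_mem_orthogonal {U : Submodule ℂ H}
    (hU : ∀ b, ∀ x ∈ U, π b x ∈ U) {p q : H} (hp : p ∈ U) (hq : q ∈ Uᗮ) :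
    vectorFunctional π (p + q) = vectorFunctional π p + vectorFunctional π q := by
  refine DFunLike.ext _ _ fun x => ?_
  change ⟪p + q, π x (p + q)⟫_ℂ = ⟪p, π x p⟫_ℂ + ⟪q, π x q⟫_ℂ
  have hpq : ⟪p, π x q⟫_ℂ = 0 := apply_mem_orthogonal hU x hq p hp
  have hqp : ⟪q, π x p⟫_ℂ = 0 := Submodule.inner_left_of_mem_orthogonal (hU x p hp) hq
  simp [hpq, hqp]

theorem isTopologicallyIrreducible_of_mem_extremePoints [PartialOrder B] [StarOrderedRing B]
    {ξ : H} (hξ : Dense (Set.range fun b => π b ξ))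
    (hext : vectorFunctional π ξ ∈ (stateSpace B).extremePoints ℝ) :
    IsTopologicallyIrreducible π := by
  intro U hUc hU
  have : CompleteSpace U := hUc.completeSpace_coe
  obtain ⟨p, hp, q, hq, hpq⟩ := U.exists_add_mem_mem_orthogonal ξ
  obtain ⟨c, hc⟩ : ∃ c : ℂ, vectorFunctional π p = c • vectorFunctional π ξ := by
    have hadd := vectorFunctional_add_of_mem_orthogonal hU hp hq
    rw [hpq, hadd] at hext ⊢
    exact ⟨_, (isPositiveFunctional_vectorFunctional p).eq_smul_of_add_mem_extremePoints
      (isPositiveFunctional_vectorFunctional q) hext⟩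
  -- Both sides have the same inner product with every vector `π x ξ`, and these are dense.
  have hpξ : p = star c • ξ := by
    refine sub_eq_zero.mp (hξ.eq_zero_of_inner_left (𝕜 := ℂ) ?_)
    rintro _ ⟨x, rfl⟩
    have hpq0 : ⟪p, π x q⟫_ℂ = 0 := apply_mem_orthogonal hU x hq p hp
    have hpp : ⟪p, π x p⟫_ℂ = c * ⟪ξ, π x ξ⟫_ℂ := DFunLike.congr_fun hc x
    have hpξ' : ⟪p, π x ξ⟫_ℂ = c * ⟪ξ, π x ξ⟫_ℂ := by
      rw [← hpp, hpq, map_add, inner_add_right, hpq0, add_zero]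
    simp [inner_sub_left, inner_smul_left, hpξ']
  by_cases hc0 : star c = 0
  · left
    have hξU : ξ ∈ Uᗮ := by rwa [hpq, hpξ, hc0, zero_smul, zero_add]
    have hUtop : Uᗮ = ⊤ := eq_top_of_cyclic_mem hξ U.isClosed_orthogonal
      (fun b _ hx => apply_mem_orthogonal hU b hx) hξU
    exact U.orthogonal_eq_top_iff.mp hUtop
  · right
    exact eq_top_of_cyclic_mem hξ hUc hU ((U.smul_mem_iff hc0).mp (hpξ ▸ hp))

end Irreducible

theorem exists_isTopologicallyIrreducible_apply_ne_zero.{u} {B : Type u} [CStarAlgebra B] {x : B}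
    (hx : x ≠ 0) :
    ∃ (H : Type u) (_ : NormedAddCommGroup H) (_ : InnerProductSpace ℂ H) (_ : CompleteSpace H)
      (π : B →⋆ₐ[ℂ] (H →L[ℂ] H)), IsTopologicallyIrreducible π ∧ π x ≠ 0 := by
  let _ : PartialOrder B := CStarAlgebra.spectralOrder B
  have : StarOrderedRing B := CStarAlgebra.spectralOrderedRing B
  obtain ⟨φ, hφ, hφx⟩ := exists_mem_extremePoints_stateSpace_apply_ne_zero
    (star_mul_self_nonneg x) ((CStarRing.star_mul_self_ne_zero_iff x).mpr hx)
  let f : B →ₚ[ℂ] ℂ := .mk₀ (φ : B →ₗ[ℂ] ℂ) hφ.1.1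
  have hfφ : vectorFunctional f.gnsStarAlgHom (gnsCyclicVector f) = φ :=
    DFunLike.ext _ _ (inner_gnsCyclicVector_gnsStarAlgHom f)
  refine ⟨f.GNS, inferInstance, inferInstance, inferInstance, f.gnsStarAlgHom,
    isTopologicallyIrreducible_of_mem_extremePoints
      (dense_range_gnsStarAlgHom_gnsCyclicVector f) (by rwa [hfφ]), fun h0 => hφx ?_⟩
  rw [← hfφ, vectorFunctional_apply, map_mul, h0]
  simp

theorem exists_isTopologicallyIrreducible_nonUnital_apply_ne_zero.{u} {A : Type u}
    [NonUnitalCStarAlgebra A] {x : A} (hx : x ≠ 0) :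
    ∃ (H : Type u) (_ : NormedAddCommGroup H) (_ : InnerProductSpace ℂ H) (_ : CompleteSpace H)
      (π : A →⋆ₙₐ[ℂ] (H →L[ℂ] H)), IsTopologicallyIrreducible π ∧ π x ≠ 0 := by
  have hx' : (x : Unitization ℂ A) ≠ 0 := Unitization.inr_injective.ne hx
  obtain ⟨H, _, _, _, π, hirr, hπx⟩ := exists_isTopologicallyIrreducible_apply_ne_zero hx'
  refine ⟨H, _, _, ‹_›, (π : Unitization ℂ A →⋆ₙₐ[ℂ] (H →L[ℂ] H)).comp
    (Unitization.inrNonUnitalStarAlgHom ℂ A), fun U hUc hU => hirr U hUc ?_, hπx⟩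
  intro z v hv
  have hz : π z v = z.fst • v + π (z.snd : Unitization ℂ A) v := by
    conv_lhs => rw [← Unitization.inl_fst_add_inr_snd_eq z]
    rw [map_add, ← Unitization.algebraMap_eq_inl, AlgHomClass.commutes,
      Algebra.algebraMap_eq_smul_one]
    simp
  rw [hz]
  exact U.add_mem (U.smul_mem _ hv) (hU z.snd v hv)

theorem ccr_unitization_directlyFinite_general.{v} {𝕜 A : Type*} [NontriviallyNormedField 𝕜]
    [NonUnitalRing A] [Module 𝕜 A] [IsScalarTower 𝕜 A A] [SMulCommClass 𝕜 A A]
    (hsep : ∀ x : A, x ≠ 0 → ∃ (X : Type v) (_ : NormedAddCommGroup X) (_ : NormedSpace 𝕜 X)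
      (_ : CompleteSpace X) (π : A →ₙₐ[𝕜] (X →L[𝕜] X)),
      (∀ y, IsCompactOperator (π y)) ∧ π x ≠ 0)
    (a b : Unitization 𝕜 A) (hab : a * b = 1) : b * a = 1 := by
  have hfst : a.fst * b.fst = 1 := by simpa using congrArg (·.fst) hab
  obtain ⟨c, hc⟩ : ∃ c : A, (c : Unitization 𝕜 A) = b * a - 1 :=
    ⟨(b * a - 1).snd, Unitization.ext (by simp [sub_eq_add_neg, mul_comm b.fst, hfst]) rfl⟩
  suffices c = 0 by rwa [this, Unitization.inr_zero, eq_comm, sub_eq_zero] at hc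
  by_contra hc0
  obtain ⟨X, _, _, _, π, hcompact, hπc⟩ := hsep c hc0
  have hb : Unitization.lift π b = b.fst • 1 + π b.snd := by
    simp [Unitization.lift, Algebra.algebraMap_eq_smul_one]
  have hπab : Unitization.lift π a * Unitization.lift π b = 1 := by rw [← map_mul, hab, map_one]
  have hπba : Unitization.lift π b * Unitization.lift π a = 1 := by
    rw [hb] at hπab ⊢
    exact smul_one_add_mul_eq_one_symm_of_isCompactOperator (hcompact b.snd)
      (right_ne_zero_of_mul_eq_one hfst) hπab
  refine hπc ?_
  calc π c = Unitization.lift π c := by simp [Unitization.lift]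
    _ = 0 := by rw [hc, map_sub, map_mul, hπba, map_one, sub_self]

/-- The unitization of a CCR (liminal) C*-algebra is directly finite. Here CCR means:
for every irreducible *-representation `π` of `A` on a Hilbert space, every `π a` is a
compact operator. -/
theorem ccr_unitization_directlyFinite
    (A : Type) [NonUnitalNormedRing A] [StarRing A] [CStarRing A]
    [NormedSpace ℂ A] [IsScalarTower ℂ A A] [SMulCommClass ℂ A A] [StarModule ℂ A]
    [CompleteSpace A]
    (hCCR : ∀ (H : Type) [NormedAddCommGroup H] [InnerProductSpace ℂ H] [CompleteSpace H]
      (π : A →⋆ₙₐ[ℂ] (H →L[ℂ] H)),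
      (∀ U : Submodule ℂ H, IsClosed (U : Set H) → (∀ a : A, ∀ x ∈ U, π a x ∈ U) →
        U = ⊥ ∨ U = ⊤) →
      ∀ a : A, IsCompactOperator ⇑(π a))
    (a b : Unitization ℂ A) (hab : a * b = 1) : b * a = 1 := by
  let _ : NonUnitalCStarAlgebra A := { }
  refine ccr_unitization_directlyFinite_general (fun x hx => ?_) a b hab
  obtain ⟨H, _, _, _, π, hirr, hπx⟩ := exists_isTopologicallyIrreducible_nonUnital_apply_ne_zero hx
  exact ⟨H, _, _, ‹_›, π, hCCR H π hirr, hπx⟩
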